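/- Define the 6-bit xorshift step f : BitVec 3 × BitVec 3 → BitVec 3 × BitVec 3 with shifts a = 1, b = 2, c = 1 by f (x, y) = (y, (t ^^^ (t >>> 2)) ^^^ (y ^^^ (y >>> 1))) where t = x ^^^ (x <<< 1). Then f has full period: for every state s ≠ (0, 0), the least p > 0 such that f^[p] s = s is p = 63 = 2^6 - 1. -/

import Mathlib

/-- The 6-bit xorshift step with 3-bit shifts `a = 1, b = 2, c = 1`. -/
def xorshiftStep (s : BitVec 3 × BitVec 3) : BitVec 3 × BitVec 3 :=
  let t := s.1 ^^^ (s.1 <<< 1)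
  (s.2, (t ^^^ (t >>> 2)) ^^^ (s.2 ^^^ (s.2 >>> 1)))

theorem xorshiftStep_iterate_sixty_three (s : BitVec 3 × BitVec 3) :
    xorshiftStep^[63] s = s := by
  have h : ∀ x y : BitVec 3, xorshiftStep^[63] (x, y) = (x, y) := by decide +kernel
  exact h s.1 s.2

theorem eq_zero_of_xorshiftStep_iterate_nine {s : BitVec 3 × BitVec 3}
    (hs : xorshiftStep^[9] s = s) : s = (0, 0) := by
  have h : ∀ x y : BitVec 3, xorshiftStep^[9] (x, y) = (x, y) → (x, y) = (0, 0) := by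
    decide +kernel
  exact h s.1 s.2 hs

theorem eq_zero_of_xorshiftStep_iterate_twenty_one {s : BitVec 3 × BitVec 3}
    (hs : xorshiftStep^[21] s = s) : s = (0, 0) := by
  have h : ∀ x y : BitVec 3, xorshiftStep^[21] (x, y) = (x, y) → (x, y) = (0, 0) := by
    decide +kernel
  exact h s.1 s.2 hs

/-- The minimal period divides `63` but neither of its maximal proper divisors `9` and `21`. -/
theorem minimalPeriod_xorshiftStep {s : BitVec 3 × BitVec 3} (hs : s ≠ (0, 0)) :
    Function.minimalPeriod xorshiftStep s = 63 := by
  have hdvd : Function.minimalPeriod xorshiftStep s ∣ 63 :=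
    Function.IsPeriodicPt.minimalPeriod_dvd (xorshiftStep_iterate_sixty_three s)
  have h9 : ¬ Function.minimalPeriod xorshiftStep s ∣ 9 := fun h =>
    hs (eq_zero_of_xorshiftStep_iterate_nine (Function.isPeriodicPt_iff_minimalPeriod_dvd.2 h))
  have h21 : ¬ Function.minimalPeriod xorshiftStep s ∣ 21 := fun h =>
    hs (eq_zero_of_xorshiftStep_iterate_twenty_one
      (Function.isPeriodicPt_iff_minimalPeriod_dvd.2 h))
  have key : ∀ d ∈ Nat.divisors 63, ¬ d ∣ 9 → ¬ d ∣ 21 → d = 63 := by decide +kernel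
  exact key _ (Nat.mem_divisors.2 ⟨hdvd, by norm_num⟩) h9 h21

/-- The 6-bit xorshift generator with shifts `a = 1, b = 2, c = 1` has full
period: for every nonzero state `s`, the least `p > 0` with `f^[p] s = s` is
`63 = 2^6 - 1`. -/
theorem xorshift6_full_period :
    ∀ s : BitVec 3 × BitVec 3, s ≠ (0, 0) →
      IsLeast {p : ℕ | 0 < p ∧ xorshiftStep^[p] s = s} 63 := by
  intro s hs
  refine ⟨⟨by norm_num, xorshiftStep_iterate_sixty_three s⟩, fun p hp => ?_⟩
  rw [← minimalPeriod_xorshiftStep hs]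
  exact Function.IsPeriodicPt.minimalPeriod_le hp.1 hp.2
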